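/- For the CP¹ projector P(w) built from a smooth function w of two variables, the Euler–Lagrange equation [∂_L∂_R P, P] = 0 holds if and only if w satisfies ∂_L∂_R w = 2w̄ (∂_L w)(∂_R w)/(1+|w|²) (together with its complex conjugate). -/

import Mathlib

attribute [local instance] Matrix.frobeniusNormedAddCommGroup Matrix.frobeniusNormedSpace

open Matrix

/-!
The matrix `P` is the orthogonal projector onto the line spanned by `z = (-w̄, 1)`. Put `Q = 1 - P`
and `P v = ⟨z, v⟩ z`, the coordinate being normalized so that `⟨z, z⟩ = 1`. As `∂_L∂_R P` is
self-adjoint, it commutes with `P` iff `Q (∂_L∂_R P) z = 0`. Differentiating `P² = P` and `P z = z`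
gives `Q (∂P) v = ⟨z, v⟩ Q (∂z)` for every vector `v`; differentiating `P z = z` twice then gives
`Q (∂_L∂_R P) z = Q (∂_L∂_R z - ⟨z, ∂_L z⟩ ∂_R z - ⟨z, ∂_R z⟩ ∂_L z)`.
For `z = (-w̄, 1)` the vector on the right is a multiple of `(1, 0)`, which `Q` does not kill.
-/

open scoped ComplexConjugate

section MixedPartials

/-- The function `f` of two real variables has first partial derivatives `fL`, `fR` and iterated
partial derivative `fLR = ∂_L ∂_R f`, where `∂_L` and `∂_R` differentiate in the first and second
variable. The order matters: `∂_R ∂_L f` need not exist. -/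
structure HasMixedPartials {E : Type*} [NormedAddCommGroup E] [NormedSpace ℝ E]
    (f fL fR fLR : ℝ × ℝ → E) : Prop where
  left : ∀ x, HasDerivAt (fun s => f (s, x.2)) (fL x) x.1
  right : ∀ x, HasDerivAt (fun s => f (x.1, s)) (fR x) x.2
  mixed : ∀ x, HasDerivAt (fun s => fR (s, x.2)) (fLR x) x.1

namespace HasMixedPartials

variable {E : Type*} [NormedAddCommGroup E] [NormedSpace ℝ E] {f fL fR fLR gL gR gLR : ℝ × ℝ → E}

theorem mixed_unique (h : HasMixedPartials f fL fR fLR) (h' : HasMixedPartials f gL gR gLR) :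
    fLR = gLR := by
  obtain rfl : fR = gR := funext fun x => (h.right x).unique (h'.right x)
  exact funext fun x => (h.mixed x).unique (h'.mixed x)

protected theorem star [StarAddMonoid E] [StarModule ℝ E] [ContinuousStar E]
    (h : HasMixedPartials f fL fR fLR) :
    HasMixedPartials (fun x => star (f x)) (fun x => star (fL x)) (fun x => star (fR x))
      (fun x => star (fLR x)) :=
  ⟨fun x => (h.left x).star, fun x => (h.right x).star, fun x => (h.mixed x).star⟩

theorem isSelfAdjoint_mixed [StarAddMonoid E] [StarModule ℝ E] [ContinuousStar E]
    (h : HasMixedPartials f fL fR fLR) (hf : ∀ x, IsSelfAdjoint (f x)) (x : ℝ × ℝ) :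
    IsSelfAdjoint (fLR x) := by
  have h_star := h.star
  simp only [(hf _).star_eq] at h_star
  exact congrFun (h_star.mixed_unique h) x

end HasMixedPartials

end MixedPartials

section MulVec

variable {R m n : Type*} [NormedRing R] [NormedAlgebra ℝ R] [Fintype n]

theorem hasDerivAt_mulVec {A : ℝ → Matrix m n R} {A' : Matrix m n R} {v : ℝ → n → R} {v' : n → R}
    {t : ℝ} (hA : HasDerivAt A A' t) (hv : HasDerivAt v v' t) :
    HasDerivAt (fun s => A s *ᵥ v s) (A' *ᵥ v t + A t *ᵥ v') t := by
  refine hasDerivAt_pi.2 fun i => ?_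
  have h_entry (j : n) := (hasDerivAt_pi.1 (hasDerivAt_pi.1 hA i) j).mul (hasDerivAt_pi.1 hv j)
  refine (HasDerivAt.fun_sum fun j _ => h_entry j).congr_deriv ?_
  simp only [Finset.sum_add_distrib, Pi.add_apply, mulVec, dotProduct]

theorem HasMixedPartials.mulVec [Fintype m] {A AL AR ALR : ℝ × ℝ → Matrix m n R}
    {v vL vR vLR : ℝ × ℝ → n → R} (hA : HasMixedPartials A AL AR ALR)
    (hv : HasMixedPartials v vL vR vLR) :
    HasMixedPartials (fun x => A x *ᵥ v x) (fun x => AL x *ᵥ v x + A x *ᵥ vL x)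
      (fun x => AR x *ᵥ v x + A x *ᵥ vR x)
      (fun x => ALR x *ᵥ v x + AR x *ᵥ vL x + (AL x *ᵥ vR x + A x *ᵥ vLR x)) where
  left x := hasDerivAt_mulVec (hA.left x) (hv.left x)
  right x := hasDerivAt_mulVec (hA.right x) (hv.right x)
  mixed x := (hasDerivAt_mulVec (hA.mixed x) (hv.left x)).add
    (hasDerivAt_mulVec (hA.left x) (hv.mixed x))

end MulVec

section Idempotent

theorem commute_iff_one_sub_mul_mul_eq_zero {R : Type*} [Ring R] [StarRing R] {a p : R}
    (ha : IsSelfAdjoint a) (hp : IsStarProjection p) :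
    Commute a p ↔ (1 - p) * (a * p) = 0 := by
  rw [sub_mul, one_mul, sub_eq_zero]
  refine ⟨fun h => ?_, fun h => ?_⟩
  · rw [h.eq, ← mul_assoc, hp.isIdempotentElem.eq]
  · have h_star := congrArg star h
    simp only [star_mul, ha.star_eq, hp.isSelfAdjoint.star_eq, mul_assoc] at h_star
    exact h.trans h_star.symm

theorem one_sub_mul_deriv_mul_one_sub_eq_zero {A : Type*} [NormedRing A] [NormedAlgebra ℝ A]
    {p : ℝ → A} {p' : A} {t : ℝ} (hp : HasDerivAt p p' t) (h : ∀ s, IsIdempotentElem (p s)) :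
    (1 - p t) * p' * (1 - p t) = 0 := by
  have h_deriv : p' * p t + p t * p' = p' :=
    HasDerivAt.unique (by simpa only [(h _).eq] using hp.fun_mul hp) hp
  calc (1 - p t) * p' * (1 - p t)
      = (1 - p t) * (p' * p t + p t * p') * (1 - p t) := by rw [h_deriv]
    _ = (1 - p t) * p' * (p t * (1 - p t)) + (1 - p t) * p t * p' * (1 - p t) := by noncomm_ring
    _ = 0 := by
      rw [(h t).mul_one_sub_self, (h t).one_sub_mul_self, mul_zero, zero_mul, zero_mul, add_zero]

end Idempotent

section LineProjector

variable {𝕜 n : Type*} [RCLike 𝕜] [Fintype n]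

/-- The coordinate along `z` of the orthogonal projection of `v` onto the line `𝕜 ∙ z`; it is `0`
when `z = 0`. -/
def lineCoord (z v : n → 𝕜) : 𝕜 :=
  (star z ⬝ᵥ v) / (star z ⬝ᵥ z)

/-- The matrix `z z† / (z† z)` of the orthogonal projector onto `𝕜 ∙ z`. For `z = 0` the division
by zero returns `0`, which is the projector onto the zero space. -/
def lineProjector (z : n → 𝕜) : Matrix n n 𝕜 :=
  (star z ⬝ᵥ z)⁻¹ • vecMulVec z (star z)

theorem lineProjector_mulVec (z v : n → 𝕜) : lineProjector z *ᵥ v = lineCoord z v • z := by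
  rw [lineProjector, lineCoord, smul_mulVec, vecMulVec_mulVec, op_smul_eq_smul, smul_smul,
    div_eq_inv_mul]

open scoped ComplexOrder in
theorem lineProjector_mulVec_self (z : n → 𝕜) : lineProjector z *ᵥ z = z := by
  obtain rfl | hz := eq_or_ne z 0
  · exact mulVec_zero _
  · rw [lineProjector_mulVec, lineCoord, div_self (dotProduct_star_self_eq_zero.not.2 hz), one_smul]

theorem isStarProjection_lineProjector (z : n → 𝕜) : IsStarProjection (lineProjector z) where
  isIdempotentElem := by
    refine ext_iff_mulVec.2 fun v => ?_
    rw [← mulVec_mulVec, lineProjector_mulVec z v, mulVec_smul, lineProjector_mulVec_self]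
  isSelfAdjoint := by
    rw [IsSelfAdjoint, star_eq_conjTranspose, lineProjector, conjTranspose_smul,
      conjTranspose_vecMulVec, star_star, star_inv₀, ← star_dotProduct]

variable {z zL zR zLR : ℝ × ℝ → n → 𝕜} {PL PR PLR : ℝ × ℝ → Matrix n n 𝕜}

section Complement

variable [DecidableEq n]

theorem one_sub_lineProjector_mulVec_self (z : n → 𝕜) : (1 - lineProjector z) *ᵥ z = 0 := by
  rw [sub_mulVec, one_mulVec, lineProjector_mulVec_self, sub_self]

theorem one_sub_lineProjector_mulVec_idem (z v : n → 𝕜) :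
    (1 - lineProjector z) *ᵥ ((1 - lineProjector z) *ᵥ v) = (1 - lineProjector z) *ᵥ v := by
  rw [mulVec_mulVec, (isStarProjection_lineProjector z).isIdempotentElem.one_sub.eq]

theorem one_sub_lineProjector_mulVec_eq_zero_iff {z v : n → 𝕜} :
    (1 - lineProjector z) *ᵥ v = 0 ↔ v ∈ Submodule.span 𝕜 {z} := by
  rw [Submodule.mem_span_singleton]
  refine ⟨fun h => ⟨lineCoord z v, ?_⟩, ?_⟩
  · rwa [sub_mulVec, one_mulVec, lineProjector_mulVec, sub_eq_zero, eq_comm] at h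
  · rintro ⟨c, rfl⟩
    rw [mulVec_smul, one_sub_lineProjector_mulVec_self, smul_zero]

theorem commute_lineProjector_iff {A : Matrix n n 𝕜} (hA : IsSelfAdjoint A) (z : n → 𝕜) :
    Commute A (lineProjector z) ↔ (1 - lineProjector z) *ᵥ (A *ᵥ z) = 0 := by
  rw [commute_iff_one_sub_mul_mul_eq_zero hA (isStarProjection_lineProjector z)]
  refine ⟨fun h => ?_, fun h => ext_iff_mulVec.2 fun v => ?_⟩
  · calc (1 - lineProjector z) *ᵥ (A *ᵥ z)
        = ((1 - lineProjector z) * (A * lineProjector z)) *ᵥ z := by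
          rw [← mulVec_mulVec, ← mulVec_mulVec, lineProjector_mulVec_self]
      _ = 0 := by rw [h, zero_mulVec]
  · rw [← mulVec_mulVec, ← mulVec_mulVec, lineProjector_mulVec, mulVec_smul, mulVec_smul, h,
      smul_zero, zero_mulVec]

theorem one_sub_lineProjector_mulVec_deriv_mulVec {z : ℝ → n → 𝕜} {z' : n → 𝕜} {P' : Matrix n n 𝕜}
    {t : ℝ} (hz : HasDerivAt z z' t) (hP : HasDerivAt (fun s => lineProjector (z s)) P' t)
    (v : n → 𝕜) :
    (1 - lineProjector (z t)) *ᵥ (P' *ᵥ v) =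
      lineCoord (z t) v • (1 - lineProjector (z t)) *ᵥ z' := by
  let : NormedRing (Matrix n n 𝕜) := frobeniusNormedRing
  let : NormedAlgebra ℝ (Matrix n n 𝕜) := frobeniusNormedAlgebra
  set P := lineProjector (z t)
  have h_offDiag : (1 - P) * P' * (1 - P) = 0 :=
    one_sub_mul_deriv_mul_one_sub_eq_zero hP fun s =>
      (isStarProjection_lineProjector (z s)).isIdempotentElem
  have h_deriv_self : P' *ᵥ z t + P *ᵥ z' = z' :=
    HasDerivAt.unique (by simpa only [lineProjector_mulVec_self] using hasDerivAt_mulVec hP hz) hz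
  have h_self : P' *ᵥ z t = (1 - P) *ᵥ z' := by
    rw [sub_mulVec, one_mulVec, eq_sub_iff_add_eq, h_deriv_self]
  calc (1 - P) *ᵥ (P' *ᵥ v)
      = ((1 - P) * P' * (1 - P)) *ᵥ v + (1 - P) *ᵥ (P' *ᵥ (P *ᵥ v)) := by
        simp only [mulVec_mulVec, ← add_mulVec]; noncomm_ring
    _ = lineCoord (z t) v • (1 - P) *ᵥ (P' *ᵥ z t) := by
        rw [h_offDiag, zero_mulVec, zero_add, lineProjector_mulVec, mulVec_smul, mulVec_smul]
    _ = lineCoord (z t) v • (1 - P) *ᵥ z' := by rw [h_self, one_sub_lineProjector_mulVec_idem]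

theorem one_sub_lineProjector_mulVec_mixed_mulVec_self (hz : HasMixedPartials z zL zR zLR)
    (hP : HasMixedPartials (fun x => lineProjector (z x)) PL PR PLR) (x : ℝ × ℝ) :
    (1 - lineProjector (z x)) *ᵥ (PLR x *ᵥ z x) =
      (1 - lineProjector (z x)) *ᵥ
        (zLR x - lineCoord (z x) (zL x) • zR x - lineCoord (z x) (zR x) • zL x) := by
  have h_mixed : PLR x *ᵥ z x + PR x *ᵥ zL x + (PL x *ᵥ zR x + lineProjector (z x) *ᵥ zLR x) =
      zLR x := by
    have h := hP.mulVec hz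
    simp only [lineProjector_mulVec_self] at h
    exact congrFun (h.mixed_unique hz) x
  have h_solve : PLR x *ᵥ z x =
      (1 - lineProjector (z x)) *ᵥ zLR x - PR x *ᵥ zL x - PL x *ᵥ zR x := by
    rw [sub_mulVec, one_mulVec]; linear_combination h_mixed
  rw [h_solve]
  simp only [mulVec_sub, mulVec_smul, one_sub_lineProjector_mulVec_idem,
    one_sub_lineProjector_mulVec_deriv_mulVec (hz.right x) (hP.right x),
    one_sub_lineProjector_mulVec_deriv_mulVec (hz.left x) (hP.left x)]

end Complement

/-- The Euler–Lagrange equation of the `CP^(N-1)` sigma model in homogeneous coordinates. -/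
theorem commute_mixed_lineProjector_iff (hz : HasMixedPartials z zL zR zLR)
    (hP : HasMixedPartials (fun x => lineProjector (z x)) PL PR PLR) (x : ℝ × ℝ) :
    Commute (PLR x) (lineProjector (z x)) ↔
      zLR x - lineCoord (z x) (zL x) • zR x - lineCoord (z x) (zR x) • zL x ∈
        Submodule.span 𝕜 {z x} := by
  classical
  have hPLR : IsSelfAdjoint (PLR x) :=
    hP.isSelfAdjoint_mixed (fun y => (isStarProjection_lineProjector (z y)).isSelfAdjoint) x
  rw [commute_lineProjector_iff hPLR, one_sub_lineProjector_mulVec_mixed_mulVec_self hz hP,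
    one_sub_lineProjector_mulVec_eq_zero_iff]

end LineProjector

section AffineChart

variable {𝕜 : Type*} [RCLike 𝕜]

theorem one_add_mul_conj_ne_zero (a : 𝕜) : 1 + a * conj a ≠ 0 := by
  rw [RCLike.mul_conj]
  exact_mod_cast (add_pos_of_pos_of_nonneg one_pos (sq_nonneg ‖a‖)).ne'

theorem lineProjector_neg_conj_one (a : 𝕜) :
    lineProjector ![-conj a, 1] = (1 / (1 + a * conj a)) • !![a * conj a, -conj a; -a, 1] := by
  ext i j
  fin_cases i <;> fin_cases j <;>
    simp [lineProjector, dotProduct, vecMulVec, add_comm, mul_comm]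

theorem lineCoord_neg_conj_one (a b : 𝕜) :
    lineCoord ![-conj a, 1] ![b, 0] = -(a * b) / (1 + a * conj a) := by
  simp [lineCoord, dotProduct, add_comm]

theorem mem_span_singleton_one_iff {R : Type*} [Ring R] {a b : R} :
    ![b, 0] ∈ Submodule.span R {![a, 1]} ↔ b = 0 := by
  rw [Submodule.mem_span_singleton]
  constructor
  · rintro ⟨c, hc⟩
    have hc_zero : c = 0 := by simpa using congrFun hc 1
    simpa [hc_zero] using (congrFun hc 0).symm
  · rintro rfl
    exact ⟨0, by ext i; fin_cases i <;> simp⟩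

theorem hasDerivAt_neg_conj_const {f : ℝ → 𝕜} {f' : 𝕜} {t : ℝ} (hf : HasDerivAt f f' t) (c : 𝕜) :
    HasDerivAt (fun s => ![-conj (f s), c]) ![-conj f', 0] t :=
  hasDerivAt_pi.2 <| Fin.forall_fin_two.2 ⟨hf.star.neg, hasDerivAt_const t c⟩

theorem HasMixedPartials.neg_conj_one {w wL wR wLR : ℝ × ℝ → 𝕜}
    (hw : HasMixedPartials w wL wR wLR) :
    HasMixedPartials (fun x => ![-conj (w x), 1]) (fun x => ![-conj (wL x), 0])
      (fun x => ![-conj (wR x), 0]) (fun x => ![-conj (wLR x), 0]) where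
  left x := hasDerivAt_neg_conj_const (hw.left x) 1
  right x := hasDerivAt_neg_conj_const (hw.right x) 1
  mixed x := hasDerivAt_neg_conj_const (hw.mixed x) 0

theorem stmt_10_general {w wL wR wLR : ℝ × ℝ → 𝕜} {P PL PR PLR : ℝ × ℝ → Matrix (Fin 2) (Fin 2) 𝕜}
    (hP_def : ∀ x, P x = (1 / (1 + w x * conj (w x))) •
      !![w x * conj (w x), -conj (w x); -w x, 1])
    (hw : HasMixedPartials w wL wR wLR) (hP : HasMixedPartials P PL PR PLR) (x : ℝ × ℝ) :
    Commute (PLR x) (P x) ↔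
      wLR x * (1 + w x * conj (w x)) = 2 * conj (w x) * wL x * wR x := by
  obtain rfl : P = fun x => lineProjector ![-conj (w x), 1] :=
    funext fun y => (hP_def y).trans (lineProjector_neg_conj_one (w y)).symm
  have h_covariant :
      ![-conj (wLR x), 0]
          - lineCoord ![-conj (w x), 1] ![-conj (wL x), 0] • ![-conj (wR x), 0]
          - lineCoord ![-conj (w x), 1] ![-conj (wR x), 0] • ![-conj (wL x), 0] =
        ![-conj (wLR x - 2 * conj (w x) * wL x * wR x / (1 + w x * conj (w x))), 0] := by
    ext i
    fin_cases i
    · simp only [Fin.zero_eta, Pi.sub_apply, Pi.smul_apply, cons_val_zero, smul_eq_mul,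
        lineCoord_neg_conj_one, map_sub, map_add, map_mul, map_div₀, map_one, RCLike.conj_conj,
        RCLike.conj_ofNat]
      ring
    · simp
  rw [commute_mixed_lineProjector_iff hw.neg_conj_one hP, h_covariant, mem_span_singleton_one_iff,
    neg_eq_zero, map_eq_zero, sub_eq_zero, eq_div_iff (one_add_mul_conj_ne_zero (w x))]

end AffineChart

/-- For the CP¹ projector built from w, the Euler–Lagrange equation
[∂_L∂_R P, P] = 0 holds iff ∂_L∂_R w (1+|w|²) = 2 w̄ ∂_L w ∂_R w together with its
complex conjugate. -/
theorem stmt_10 (w wL wR wLR : ℝ × ℝ → ℂ)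
    (P PL PR PLR : ℝ × ℝ → Matrix (Fin 2) (Fin 2) ℂ)
    (hPdef : ∀ x, P x = (1 / (1 + (Complex.normSq (w x) : ℂ))) •
      !![(Complex.normSq (w x) : ℂ), -(starRingEnd ℂ (w x)); -(w x), 1])
    (hwL : ∀ x : ℝ × ℝ, HasDerivAt (fun s => w (s, x.2)) (wL x) x.1)
    (hwR : ∀ x : ℝ × ℝ, HasDerivAt (fun s => w (x.1, s)) (wR x) x.2)
    (hwLR : ∀ x : ℝ × ℝ, HasDerivAt (fun s => wR (s, x.2)) (wLR x) x.1)
    (hwRL : ∀ x : ℝ × ℝ, HasDerivAt (fun s => wL (x.1, s)) (wLR x) x.2)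
    (hPL : ∀ x : ℝ × ℝ, HasDerivAt (fun s => P (s, x.2)) (PL x) x.1)
    (hPR : ∀ x : ℝ × ℝ, HasDerivAt (fun s => P (x.1, s)) (PR x) x.2)
    (hPLR : ∀ x : ℝ × ℝ, HasDerivAt (fun s => PR (s, x.2)) (PLR x) x.1)
    (hPRL : ∀ x : ℝ × ℝ, HasDerivAt (fun s => PL (x.1, s)) (PLR x) x.2)
    (x : ℝ × ℝ) :
    PLR x * P x = P x * PLR x ↔
      (wLR x * (1 + (Complex.normSq (w x) : ℂ)) =
          2 * starRingEnd ℂ (w x) * wL x * wR x ∧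
        starRingEnd ℂ (wLR x) * (1 + (Complex.normSq (w x) : ℂ)) =
          2 * w x * starRingEnd ℂ (wL x) * starRingEnd ℂ (wR x)) := by
  rw [and_iff_left_of_imp fun h => by simpa [Complex.conj_ofNat] using congrArg conj h]
  simpa only [Complex.mul_conj, commute_iff_eq] using stmt_10_general
    (by simpa only [Complex.mul_conj] using hPdef) ⟨hwL, hwR, hwLR⟩ ⟨hPL, hPR, hPLR⟩ x
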